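/- Let n ≥ 3 be an integer and let U and V be real vector spaces. A mapping Q : U → V satisfies equation (E_n) if and only if Q is quadratic, i.e. Q(x+y) + Q(x−y) = 2Q(x) + 2Q(y) for all x, y ∈ U. -/

import Mathlib

/-- Equation (E_n): `n·∑_{1≤i<j≤n} Q(x_i − x_j) = ∑_{i=1}^{n} Q((∑_{j=1}^{n} x_j) − n·x_i)`. -/
def SatisfiesEn {U V : Type*} [AddCommGroup U] [AddCommGroup V] (n : ℕ) (Q : U → V) : Prop :=
  ∀ x : Fin n → U,
    n • ∑ p ∈ Finset.univ.filter (fun p : Fin n × Fin n => p.1 < p.2), Q (x p.1 - x p.2)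
      = ∑ i : Fin n, Q ((∑ j : Fin n, x j) - n • x i)

/-!
A quadratic map satisfies `∑_{i<j} Q (x_i - x_j) + Q (∑ x_i) = n ∑ Q (x_i)`, and expanding each
`Q (∑ x_j - n x_i)` with the bilinear polar form reduces (E_n) to this identity.

Conversely, (E_n) makes `Q` even with `Q 0 = 0`. If `n ≥ 4`, evaluate (E_n) at
`(x, -x, y, -y, 0, …, 0)`: the right-hand side is a function of `x` plus a function of `y`, so
subtracting the instances `y = 0` and `x = 0` isolates the parallelogram law. If `n = 3`, there is
no room for two opposite pairs, and one uses the defect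
`F x y = Q (x + y) + Q (x - y) - 2 Q x - 2 Q y` instead: (E_3) forces `F (2x) y = F x (2y) = F x y`,
whereas `Q (2x) = 4 Q x` gives `F (2x) (2y) = 4 F x y`, so `F = 0`.
-/

open Finset QuadraticMap

theorem sum_pairs_lt_cons {U V : Type*} [Sub U] [AddCommMonoid V] {n : ℕ} (Q : U → V) (a : U)
    (x : Fin n → U) :
    ∑ p : Fin (n + 1) × Fin (n + 1) with p.1 < p.2,
        Q ((Fin.cons a x : Fin (n + 1) → U) p.1 - (Fin.cons a x : Fin (n + 1) → U) p.2)
      = ∑ j, Q (a - x j) + ∑ p : Fin n × Fin n with p.1 < p.2, Q (x p.1 - x p.2) := by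
  simp [sum_filter, Fintype.sum_prod_type, Fin.sum_univ_succ]

section QuadraticMap

variable {R M N : Type*} [CommRing R] [AddCommGroup M] [AddCommGroup N] [Module R M] [Module R N]

theorem map_sub_eq_add_sub_polar (q : QuadraticMap R M N) (x y : M) :
    q (x - y) = q x + q y - polar q x y := by
  rw [sub_eq_add_neg, QuadraticMap.map_add q, q.map_neg, polar_neg_right, ← sub_eq_add_neg]

theorem sum_polar_right (q : QuadraticMap R M N) {ι : Type*} (s : Finset ι) (x : M) (y : ι → M) :
    ∑ i ∈ s, polar q x (y i) = polar q x (∑ i ∈ s, y i) :=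
  (map_sum (q.polarBilin x) y s).symm

theorem sum_map_sub_add_map_sum (q : QuadraticMap R M N) {n : ℕ} (x : Fin n → M) :
    ∑ p : Fin n × Fin n with p.1 < p.2, q (x p.1 - x p.2) + q (∑ i, x i)
      = n • ∑ i, q (x i) := by
  induction x using Fin.consInduction with
  | elim0 => simp
  | cons a x tail =>
    rw [sum_pairs_lt_cons, Fin.sum_cons, QuadraticMap.map_add q]
    simp only [Fin.sum_univ_succ, Fin.cons_zero, Fin.cons_succ, map_sub_eq_add_sub_polar q a,
      sum_sub_distrib, sum_add_distrib, sum_const, card_univ, Fintype.card_fin, sum_polar_right]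
    linear_combination (norm := module) tail

theorem satisfiesEn_of_quadraticMap (q : QuadraticMap R M N) (n : ℕ) : SatisfiesEn n q := by
  intro x
  have map_sub_nsmul (i : Fin n) : q (∑ j, x j - n • x i)
      = q (∑ j, x j) + (n * n) • q (x i) - n • polar q (∑ j, x j) (x i) := by
    rw [map_sub_eq_add_sub_polar, ← Nat.cast_smul_eq_nsmul R, q.map_smul, polar_smul_right]
    module
  simp only [map_sub_nsmul, sum_sub_distrib, sum_add_distrib, sum_const, card_univ,
    Fintype.card_fin, ← smul_sum, sum_polar_right, polar_self]
  linear_combination (norm := module) n • sum_map_sub_add_map_sum q x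

end QuadraticMap

/-- A quadratic map between abelian groups, given by the parallelogram law alone. -/
def IsQuadratic {U V : Type*} [AddCommGroup U] [AddCommGroup V] (Q : U → V) : Prop :=
  ∀ x y : U, Q (x + y) + Q (x - y) = 2 • Q x + 2 • Q y

section TorsionFree

variable {U V : Type*} [AddCommGroup U] [AddCommGroup V] [IsAddTorsionFree V] {Q : U → V}

namespace IsQuadratic

protected theorem map_zero (hQ : IsQuadratic Q) : Q 0 = 0 := by
  have h := hQ 0 0
  simp only [add_zero, sub_zero] at h
  refine two_nsmul_eq_zero.mp ?_
  linear_combination (norm := module) -h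

protected theorem polar_add_left (hQ : IsQuadratic Q) (x y z : U) :
    polar Q (x + y) z = polar Q x z + polar Q y z := by
  have h₁ := hQ (x + y) z
  have h₂ := hQ x (y - z)
  have h₃ := hQ (x + z) y
  have h₄ := hQ y z
  rw [show x + (y - z) = x + y - z by abel, show x - (y - z) = x + z - y by abel] at h₂
  rw [add_right_comm] at h₃
  refine nsmul_right_injective two_ne_zero ?_
  simp only [polar]
  linear_combination (norm := module) h₁ - h₂ + h₃ - 2 • h₄

theorem polar_zsmul_left (hQ : IsQuadratic Q) (a : ℤ) (x y : U) :
    polar Q (a • x) y = a • polar Q x y :=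
  map_zsmul (AddMonoidHom.mk' (polar Q · y) fun x z ↦ hQ.polar_add_left x z y) a x

protected theorem polar_self (hQ : IsQuadratic Q) (x : U) : polar Q x x = 2 • Q x := by
  have h := hQ x x
  rw [sub_self, hQ.map_zero] at h
  rw [polar]
  linear_combination (norm := module) h

protected theorem map_zsmul (hQ : IsQuadratic Q) (a : ℤ) (x : U) : Q (a • x) = (a * a) • Q x := by
  refine nsmul_right_injective two_ne_zero ?_
  calc 2 • Q (a • x) = polar Q (a • x) (a • x) := (hQ.polar_self _).symm
    _ = (a * a) • polar Q x x := by
      rw [hQ.polar_zsmul_left, polar_comm, hQ.polar_zsmul_left, mul_smul]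
    _ = 2 • (a * a) • Q x := by rw [hQ.polar_self, smul_comm]

/-- A map satisfying the parallelogram law as a `QuadraticMap` over `ℤ`, which makes the algebra of
its polar form available. -/
def toQuadraticMap (hQ : IsQuadratic Q) : QuadraticMap ℤ U V :=
  .ofPolar Q hQ.map_zsmul hQ.polar_add_left hQ.polar_zsmul_left

end IsQuadratic

/-- Equation (E_3) for an even `Q`, in the differences `x = x₁ - x₂` and `y = x₂ - x₃`. With
`a + b + c = 0` it reads `Q (a - b) + Q (b - c) + Q (c - a) = 3 • (Q a + Q b + Q c)`: passing from
the six short vectors `±a, ±b, ±c` of a hexagonal lattice to the next six multiplies the sum of `Q`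
by `3`. -/
def SatisfiesHexagon {U V : Type*} [AddCommGroup U] [AddCommGroup V] (Q : U → V) : Prop :=
  ∀ x y : U, Q (2 • x + y) + Q (x + 2 • y) + Q (x - y) = 3 • (Q x + Q y + Q (x + y))

namespace SatisfiesHexagon

protected theorem map_zero (hQ : SatisfiesHexagon Q) : Q 0 = 0 := by
  have h := hQ 0 0
  simp only [smul_zero, add_zero, sub_zero] at h
  grind

theorem map_two_nsmul (hQ : SatisfiesHexagon Q) (x : U) : Q (2 • x) = 4 • Q x := by
  have h := hQ x 0
  simp only [smul_zero, add_zero, sub_zero, hQ.map_zero] at h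
  linear_combination (norm := module) h

theorem map_three_nsmul (hQ : SatisfiesHexagon Q) (x : U) : Q (3 • x) = 9 • Q x := by
  have h := hQ x x
  rw [show 2 • x + x = 3 • x by module, show x + 2 • x = 3 • x by module, sub_self,
    hQ.map_zero, ← two_nsmul x, hQ.map_two_nsmul] at h
  refine nsmul_right_injective two_ne_zero ?_
  linear_combination (norm := module) h

protected theorem map_neg (hQ : SatisfiesHexagon Q) (x : U) : Q (-x) = Q x := by
  have h := hQ 0 x
  simp only [smul_zero, zero_add, zero_sub, hQ.map_zero, hQ.map_two_nsmul] at h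
  linear_combination (norm := module) h

end SatisfiesHexagon

/-- The amount by which `Q` fails the parallelogram law at `(x, y)`. -/
def parallelogramDefect {U V : Type*} [AddCommGroup U] [AddCommGroup V] (Q : U → V) (x y : U) : V :=
  Q (x + y) + Q (x - y) - (2 • Q x + 2 • Q y)

namespace SatisfiesHexagon

theorem parallelogramDefect_two_two (hQ : SatisfiesHexagon Q) (x y : U) :
    parallelogramDefect Q (2 • x) (2 • y) = 4 • parallelogramDefect Q x y := by
  simp only [parallelogramDefect, ← smul_add, ← smul_sub, hQ.map_two_nsmul]
  module

theorem parallelogramDefect_two_left_add_two_right (hQ : SatisfiesHexagon Q) (x y : U) :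
    parallelogramDefect Q (2 • x) y + parallelogramDefect Q x (2 • y)
      = 2 • parallelogramDefect Q x y := by
  have hpos := hQ x y
  have hneg := hQ x (-y)
  simp only [smul_neg, ← sub_eq_add_neg, sub_neg_eq_add, hQ.map_neg] at hneg
  simp only [parallelogramDefect, hQ.map_two_nsmul]
  linear_combination (norm := module) hpos + hneg

theorem parallelogramDefect_three_left (hQ : SatisfiesHexagon Q) (x y : U) :
    parallelogramDefect Q (3 • x) y = 3 • parallelogramDefect Q x y := by
  have h := hQ (x + y) (x - y)
  rw [show 2 • (x + y) + (x - y) = 3 • x + y by module,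
    show x + y + 2 • (x - y) = 3 • x - y by module, show x + y - (x - y) = 2 • y by module,
    show x + y + (x - y) = 2 • x by module, hQ.map_two_nsmul, hQ.map_two_nsmul] at h
  simp only [parallelogramDefect, hQ.map_three_nsmul]
  linear_combination (norm := module) h

theorem parallelogramDefect_two_left_eq_two_right (hQ : SatisfiesHexagon Q) (x y : U) :
    parallelogramDefect Q (2 • x) y = parallelogramDefect Q x (2 • y) := by
  -- The hexagon identity at `(x + z, x)`, to be symmetrised over `z = ± y`.
  have shifted (z : U) :
      Q (3 • x + 2 • z) + Q (3 • x + z) + Q z = 3 • (Q (x + z) + Q x + Q (2 • x + z)) := by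
    have h := hQ (x + z) x
    rwa [show 2 • (x + z) + x = 3 • x + 2 • z by module,
      show x + z + 2 • x = 3 • x + z by module, show x + z - x = z by module,
      show x + z + x = 2 • x + z by module] at h
  have hpos := shifted y
  have hneg := shifted (-y)
  simp only [smul_neg, ← sub_eq_add_neg, hQ.map_neg] at hneg
  have tripled : parallelogramDefect Q (3 • x) (2 • y) + parallelogramDefect Q (3 • x) y
      = 3 • (parallelogramDefect Q x y + parallelogramDefect Q (2 • x) y) := by
    simp only [parallelogramDefect, hQ.map_two_nsmul, hQ.map_three_nsmul]
    linear_combination (norm := module) hpos + hneg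
  simp only [hQ.parallelogramDefect_three_left] at tripled
  refine nsmul_right_injective three_ne_zero ?_
  linear_combination (norm := module) -tripled

theorem isQuadratic (hQ : SatisfiesHexagon Q) : IsQuadratic Q := by
  intro x y
  let F := parallelogramDefect Q
  have two_right (x y : U) : F x (2 • y) = F x y := by
    have h := hQ.parallelogramDefect_two_left_add_two_right x y
    rw [hQ.parallelogramDefect_two_left_eq_two_right, ← two_nsmul] at h
    exact nsmul_right_injective two_ne_zero h
  have four_mul : 4 • F x y = F x y :=
    calc 4 • F x y = F (2 • x) (2 • y) := (hQ.parallelogramDefect_two_two x y).symm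
      _ = F (2 • x) y := two_right _ _
      _ = F x (2 • y) := hQ.parallelogramDefect_two_left_eq_two_right x y
      _ = F x y := two_right x y
  have defect_eq_zero : F x y = 0 := by grind
  exact sub_eq_zero.mp defect_eq_zero

end SatisfiesHexagon

namespace SatisfiesEn

protected theorem map_zero {n : ℕ} (hn : 3 ≤ n) (hQ : SatisfiesEn n Q) : Q 0 = 0 := by
  obtain ⟨k, rfl⟩ := Nat.exists_eq_add_of_le' hn
  let c := #{p : Fin (k + 1) × Fin (k + 1) | p.1 < p.2}
  have at_zero : (k + 3) • (Q 0 + (k + 1) • Q 0 + ((k + 1) • Q 0 + c • Q 0))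
      = Q 0 + (Q 0 + (k + 1) • Q 0) := by
    simpa [sum_pairs_lt_cons, Fin.sum_univ_succ] using hQ (Fin.cons 0 (Fin.cons 0 0))
  have multiple_eq_zero : ((k + 3) * (2 * k + 2 + c)) • Q 0 = 0 := by
    linear_combination (norm := module) at_zero
  exact (nsmul_eq_zero_iff_right (by positivity)).mp multiple_eq_zero

protected theorem map_neg {n : ℕ} (hn : 3 ≤ n) (hQ : SatisfiesEn n Q) (a : U) : Q (-a) = Q a := by
  have h₀ := hQ.map_zero hn
  obtain ⟨k, rfl⟩ := Nat.exists_eq_add_of_le' hn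
  have first : (k + 3) • (Q a + (k + 1) • Q a)
      = Q (a - (k + 3) • a) + (Q a + (k + 1) • Q a) := by
    simpa [sum_pairs_lt_cons, Fin.sum_univ_succ, h₀] using hQ (Fin.cons a (Fin.cons 0 0))
  have second : (k + 3) • (Q (-a) + (k + 1) • Q a)
      = Q a + (Q (a - (k + 3) • a) + (k + 1) • Q a) := by
    simpa [sum_pairs_lt_cons, Fin.sum_univ_succ, h₀] using hQ (Fin.cons 0 (Fin.cons a 0))
  refine nsmul_right_injective (Nat.succ_ne_zero (k + 2)) ?_
  linear_combination (norm := module) second - first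

theorem satisfiesHexagon (hQ : SatisfiesEn 3 Q) : SatisfiesHexagon Q := by
  intro x y
  have h : 3 • (Q x + Q (x + y) + Q y)
      = Q (x + -y - 3 • x) + (Q (x + -y) + Q (x + -y + 3 • y)) := by
    simpa [sum_pairs_lt_cons, Fin.sum_univ_succ]
      using hQ (Fin.cons x (Fin.cons 0 (Fin.cons (-y) Fin.elim0)))
  rw [show x + -y - 3 • x = -(2 • x + y) by module, show x + -y + 3 • y = x + 2 • y by module,
    hQ.map_neg le_rfl, ← sub_eq_add_neg] at h
  linear_combination (norm := module) -h

theorem apply_opposite_pairs {k : ℕ} (hQ : SatisfiesEn (k + 4) Q) (x y : U) :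
    (k + 4) • (Q (2 • x) + Q (2 • y) + 2 • (Q (x + y) + Q (x - y)) + (2 * k) • (Q x + Q y))
      = 2 • (Q ((k + 4) • x) + Q ((k + 4) • y)) := by
  have h₀ := hQ.map_zero (by lia)
  have hneg := hQ.map_neg (by lia)
  have h : (k + 4) • (Q (x + x) + (Q (x - y) + (Q (x + y) + k • Q x))
        + (Q (-x - y) + (Q (-x + y) + k • Q x) + (Q (y + y) + k • Q y + k • Q y)))
      = Q ((k + 4) • x) + (Q ((k + 4) • x) + (Q ((k + 4) • y) + Q ((k + 4) • y))) := by
    simpa [sum_pairs_lt_cons, Fin.sum_univ_succ, h₀, hneg]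
      using hQ (Fin.cons x (Fin.cons (-x) (Fin.cons y (Fin.cons (-y) 0))))
  rw [← neg_add', neg_add_eq_sub, ← neg_sub x y, hneg, hneg, ← two_nsmul x, ← two_nsmul y] at h
  linear_combination (norm := module) h

theorem isQuadratic_of_four_le {n : ℕ} (hn : 4 ≤ n) (hQ : SatisfiesEn n Q) : IsQuadratic Q := by
  obtain ⟨k, rfl⟩ := Nat.exists_eq_add_of_le' hn
  intro x y
  have hxy := hQ.apply_opposite_pairs x y
  have hx := hQ.apply_opposite_pairs x 0
  have hy := hQ.apply_opposite_pairs y 0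
  simp only [smul_zero, add_zero, sub_zero, hQ.map_zero (by lia)] at hx hy
  refine nsmul_right_injective (n := 2 * (k + 4)) (by positivity) ?_
  linear_combination (norm := module) hxy - hx - hy

theorem isQuadratic {n : ℕ} (hn : 3 ≤ n) (hQ : SatisfiesEn n Q) : IsQuadratic Q := by
  obtain rfl | hn := hn.eq_or_lt
  · exact hQ.satisfiesHexagon.isQuadratic
  · exact hQ.isQuadratic_of_four_le hn

end SatisfiesEn

end TorsionFree

theorem stmt_3_general {U V : Type*} [AddCommGroup U] [AddCommGroup V] [IsAddTorsionFree V]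
    (n : ℕ) (hn : 3 ≤ n) (Q : U → V) :
    SatisfiesEn n Q ↔
      (∀ x y : U, Q (x + y) + Q (x - y) = (2 : ℕ) • Q x + (2 : ℕ) • Q y) :=
  ⟨SatisfiesEn.isQuadratic hn,
    fun hQ ↦ satisfiesEn_of_quadraticMap (IsQuadratic.toQuadraticMap hQ) n⟩

/-- For an integer `n ≥ 3`, a mapping `Q` between real vector spaces
satisfies equation (E_n) iff `Q` is quadratic. -/
theorem stmt_3 {U V : Type*} [AddCommGroup U] [Module ℝ U] [AddCommGroup V] [Module ℝ V]
    (n : ℕ) (hn : 3 ≤ n) (Q : U → V) :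
    SatisfiesEn n Q ↔
      (∀ x y : U, Q (x + y) + Q (x - y) = (2 : ℕ) • Q x + (2 : ℕ) • Q y) := by
  have : IsAddTorsionFree V := .of_isTorsionFree ℝ V
  exact stmt_3_general n hn Q
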